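/- Let L be a finitely generated free ℤ-module and σ : L → L an involution (σ² = id). Let σ* denote the dual involution on L* = Hom(L, ℤ) defined by (σ*φ)(x) = φ(σx). Set H(L,σ) = ker(id - σ)/im(id + σ). Then H(L,σ) and H(L*, σ*) are finite groups of the same cardinality (equivalently, isomorphic finite elementary abelian 2-groups). -/

import Mathlib

/-!
Let `f : M → N` and `g : N → M` be maps of lattices of equal rank with `gf = 0` and `fg = 0`, such
as `1 + σ` and `1 - σ`. View `f` as a map `ν : M → ker g`. Since `ker g` is a direct summand of
`N`, functionals on it extend to `N`, so the transpose `ν*` has the same range as `f*` and, viewed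
as a map `μ : (ker g)* → ker g*`, has cokernel `ker g* / im f*`. In the same way the range of `μ*`
is that of `ν`, up to biduality. As `ker g` and `ker g*` have the same rank, the Smith normal form
of `μ` identifies its cokernel with that of its transpose, hence with `ker g / im f`.

For an involution these groups are finite since `2x = (1 + σ)x` on `ker (1 - σ)`.
-/

/-- The homology `ker g / im f` at the middle term of `M → N → P`. When `f` does not map into
`ker g`, the range of `f` is intersected with `ker g`. -/
abbrev MiddleHomology {R M N P : Type*} [CommRing R] [AddCommGroup M] [AddCommGroup N]
    [AddCommGroup P] [Module R M] [Module R N] [Module R P] (f : M →ₗ[R] N) (g : N →ₗ[R] P) :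
    Type _ :=
  LinearMap.ker g ⧸ (LinearMap.range f).submoduleOf (LinearMap.ker g)

/-- The Tate cohomology group `ker (1 - σ) / im (1 + σ)`, that is, `Ĥ⁰` of the group of order two
acting on `L` through the involution `σ`. -/
abbrev InvolutionTateCohomology {R L : Type*} [CommRing R] [AddCommGroup L] [Module R L]
    (σ : L →ₗ[R] L) : Type _ :=
  MiddleHomology (LinearMap.id + σ) (LinearMap.id - σ)

section Finiteness

variable {R M : Type*} [CommRing R] [AddCommGroup M] [Module R M]

theorem finite_of_isTorsionBy [Module.Finite R M] {r : R} [Finite (R ⧸ Ideal.span {r})]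
    (h : Module.IsTorsionBy R M r) : Finite M := by
  have hI := (Module.isTorsionBySet_span_singleton_iff r).mpr h
  let := hI.module
  have : IsScalarTower R (R ⧸ Ideal.span {r}) M := hI.isScalarTower
  have := Module.Finite.of_restrictScalars_finite R (R ⧸ Ideal.span {r}) M
  exact Module.finite_of_finite (R ⧸ Ideal.span {r})

theorem isTorsionBy_two_involutionTateCohomology (σ : M →ₗ[R] M) :
    Module.IsTorsionBy R (InvolutionTateCohomology σ) 2 := by
  intro a
  obtain ⟨x, rfl⟩ := Submodule.Quotient.mk_surjective _ a
  have hx : (x : M) = σ x := sub_eq_zero.mp x.2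
  rw [← Submodule.Quotient.mk_smul, Submodule.Quotient.mk_eq_zero]
  exact ⟨x, by simp [← hx, two_smul]⟩

theorem finite_involutionTateCohomology [IsNoetherianRing R] [Module.Finite R M]
    [Finite (R ⧸ Ideal.span {(2 : R)})] (σ : M →ₗ[R] M) :
    Finite (InvolutionTateCohomology σ) :=
  finite_of_isTorsionBy (isTorsionBy_two_involutionTateCohomology σ)

end Finiteness

section Duality

open Module (Basis Dual finrank)

theorem dualMap_subtype_ker_surjective {R M N : Type*} [CommRing R] [AddCommGroup M]
    [Module R M] [AddCommGroup N] [Module R N] (f : M →ₗ[R] N)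
    [Module.Projective R (LinearMap.range f)] :
    Function.Surjective (LinearMap.ker f).subtype.dualMap := by
  obtain ⟨s, hs⟩ := f.rangeRestrict.exists_rightInverse_of_surjective f.range_rangeRestrict
  have hfs (y : LinearMap.range f) : f (s y) = y := congrArg Subtype.val (LinearMap.congr_fun hs y)
  let retraction : M →ₗ[R] LinearMap.ker f :=
    (LinearMap.id - s ∘ₗ f.rangeRestrict).codRestrict _ fun x ↦ by simp [hfs]
  have hretraction : retraction ∘ₗ (LinearMap.ker f).subtype = LinearMap.id := by
    ext ⟨x, hx⟩
    have hx' : f.rangeRestrict x = 0 := Subtype.ext hx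
    simp [retraction, hx']
  exact fun ψ ↦ ⟨ψ ∘ₗ retraction, by
    rw [LinearMap.dualMap_apply', LinearMap.comp_assoc, hretraction, LinearMap.comp_id]⟩

variable {R M N : Type*} [CommRing R] [IsDomain R] [IsPrincipalIdealRing R]
  [AddCommGroup M] [Module R M] [Module.Free R M] [Module.Finite R M]
  [AddCommGroup N] [Module R N] [Module.Free R N] [Module.Finite R N]

theorem exists_bases_apply_eq_smul (f : M →ₗ[R] N) (hrank : finrank R M = finrank R N) :
    ∃ (ι : Type) (_ : Fintype ι) (b : Basis ι R M) (c : Basis ι R N) (a : ι → R),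
      ∀ i, f (b i) = a i • c i := by
  classical
  obtain ⟨r, snf⟩ := (LinearMap.range f).smithNormalForm (Module.finBasis R N)
  let S := Set.range snf.f
  have hker : finrank R (LinearMap.ker f) = Fintype.card (Sᶜ : Set _) := by
    have hquot := (LinearMap.ker f).finrank_quotient_add_finrank
    rw [f.quotKerEquivRange.finrank_eq, Module.finrank_eq_card_basis snf.bN, hrank] at hquot
    rw [Fintype.card_compl_set, Set.card_range_of_injective snf.f.injective, Fintype.card_fin]
    exact (Nat.sub_eq_of_eq_add' hquot.symm).symm
  let bKer : Basis (Sᶜ : Set _) R (LinearMap.ker f) :=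
    (Module.finBasis R (LinearMap.ker f)).reindex (Fintype.equivOfCardEq (by simp [hker]))
  let bQuot : Basis (Fin r) R (M ⧸ LinearMap.ker f) := snf.bN.map f.quotKerEquivRange.symm
  let e : (Sᶜ : Set _) ⊕ Fin r ≃ Fin (finrank R N) :=
    (Equiv.sumComm _ _).trans
      ((snf.f.toEquivRange.sumCongr (Equiv.refl _)).trans (Equiv.Set.sumCompl S))
  refine ⟨_, inferInstance, bKer.sumQuot bQuot, snf.bM.reindex e.symm, Sum.elim 0 snf.a, ?_⟩
  rintro (i | j)
  · simp
  · rw [← f.quotKerEquivRange_apply_mk, Module.Basis.sumQuot_inr]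
    simp [bQuot, e, snf.snf]

theorem nonempty_quotient_range_equiv_dualMap (f : M →ₗ[R] N)
    (hrank : finrank R M = finrank R N) :
    Nonempty ((N ⧸ LinearMap.range f) ≃ₗ[R] (Dual R M ⧸ LinearMap.range f.dualMap)) := by
  classical
  obtain ⟨ι, _, b, c, a, hf⟩ := exists_bases_apply_eq_smul f hrank
  have hdual (i) : f.dualMap (c.coord i) = a i • b.coord i := by
    refine b.ext fun j ↦ ?_
    obtain rfl | hij := eq_or_ne i j
    · simp [hf]
    · simp [hf, hij]
  let eM : M ≃ₗ[R] Dual R N := b.equiv c.dualBasis (Equiv.refl _)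
  let eN : N ≃ₗ[R] Dual R M := c.equiv b.dualBasis (Equiv.refl _)
  have hcomm : eN.toLinearMap ∘ₗ f = f.dualMap ∘ₗ eM.toLinearMap :=
    b.ext fun i ↦ by simp [eM, eN, hf, hdual]
  refine ⟨Submodule.Quotient.equiv _ _ eN ?_⟩
  rw [← LinearMap.range_comp, hcomm, LinearEquiv.range_comp]

theorem finrank_ker_dualMap (f : M →ₗ[R] N) (hrank : finrank R M = finrank R N) :
    finrank R (LinearMap.ker f.dualMap) = finrank R (LinearMap.ker f) := by
  obtain ⟨e⟩ := nonempty_quotient_range_equiv_dualMap f hrank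
  have hcoker := e.finrank_eq
  have h₁ := (LinearMap.range f).finrank_quotient_add_finrank
  have h₂ := (LinearMap.range f.dualMap).finrank_quotient_add_finrank
  have h₃ := (LinearMap.ker f).finrank_quotient_add_finrank
  have h₄ := (LinearMap.ker f.dualMap).finrank_quotient_add_finrank
  rw [LinearEquiv.finrank_eq (LinearMap.quotKerEquivRange _)] at h₃ h₄
  rw [Module.finrank_linearMap_self] at h₂ h₄
  omega

theorem nonempty_quotient_range_equiv_of_comp_eq_dualMap {K K' : Type*}
    [AddCommGroup K] [Module R K] [Module.Free R K] [Module.Finite R K]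
    [AddCommGroup K'] [Module R K'] [Module.Free R K'] [Module.Finite R K']
    (ν : M →ₗ[R] K) (μ : Dual R K →ₗ[R] K') (i : K' →ₗ[R] Dual R M)
    (hi : Function.Surjective i.dualMap) (hiμ : i ∘ₗ μ = ν.dualMap)
    (hrank : finrank R K = finrank R K') :
    Nonempty ((K ⧸ LinearMap.range ν) ≃ₗ[R] (K' ⧸ LinearMap.range μ)) := by
  have hrange : (LinearMap.range ν).map (Module.evalEquiv R K).toLinearMap =
      LinearMap.range μ.dualMap :=
    calc (LinearMap.range ν).map (Module.evalEquiv R K).toLinearMap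
        = LinearMap.range (Dual.eval R K ∘ₗ ν) := (LinearMap.range_comp ..).symm
      _ = LinearMap.range (ν.dualMap.dualMap ∘ₗ (Module.evalEquiv R M).toLinearMap) :=
        congrArg LinearMap.range (Dual.eval_naturality ν).symm
      _ = LinearMap.range (μ.dualMap ∘ₗ i.dualMap) := by
        rw [LinearEquiv.range_comp, ← hiμ, LinearMap.dualMap_comp_dualMap]
      _ = LinearMap.range μ.dualMap :=
        LinearMap.range_comp_of_range_eq_top _ (LinearMap.range_eq_top.mpr hi)
  obtain ⟨e⟩ := nonempty_quotient_range_equiv_dualMap μ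
    ((Module.finrank_linearMap_self ..).trans hrank)
  exact ⟨(Submodule.Quotient.equiv _ _ (Module.evalEquiv R K) hrange).trans e.symm⟩

theorem nonempty_middleHomology_equiv_dualMap (f : M →ₗ[R] N) (g : N →ₗ[R] M)
    (hgf : g ∘ₗ f = 0) (hfg : f ∘ₗ g = 0) (hrank : finrank R M = finrank R N) :
    Nonempty (MiddleHomology f g ≃ₗ[R] MiddleHomology f.dualMap g.dualMap) := by
  let ν : M →ₗ[R] LinearMap.ker g := f.codRestrict _ (LinearMap.congr_fun hgf)
  have hν : (LinearMap.ker g).subtype ∘ₗ ν = f := LinearMap.subtype_comp_codRestrict ..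
  have hνg : ν ∘ₗ g = 0 := LinearMap.ext fun x ↦ Subtype.ext (LinearMap.congr_fun hfg x)
  let μ : Dual R (LinearMap.ker g) →ₗ[R] LinearMap.ker g.dualMap :=
    ν.dualMap.codRestrict _ fun ψ ↦ by
      rw [LinearMap.mem_ker, LinearMap.dualMap_apply', LinearMap.dualMap_apply',
        LinearMap.comp_assoc, hνg, LinearMap.comp_zero]
  have hrange_νdual : LinearMap.range ν.dualMap = LinearMap.range f.dualMap := by
    rw [← hν, ← LinearMap.dualMap_comp_dualMap, LinearMap.range_comp_of_range_eq_top _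
      (LinearMap.range_eq_top.mpr (dualMap_subtype_ker_surjective g))]
  have hrange_ν : LinearMap.range ν = (LinearMap.range f).submoduleOf (LinearMap.ker g) :=
    LinearMap.range_codRestrict ..
  have hrange_μ : LinearMap.range μ =
      (LinearMap.range f.dualMap).submoduleOf (LinearMap.ker g.dualMap) :=
    hrange_νdual ▸ LinearMap.range_codRestrict ..
  -- Instance search does not find the next two instances on submodules of a dual.
  have : Module.Free R (LinearMap.ker g.dualMap) :=
    Module.free_of_finite_type_torsion_free' (M := LinearMap.ker g.dualMap)
  have : Module.Free R (LinearMap.range g.dualMap) :=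
    Module.free_of_finite_type_torsion_free' (M := LinearMap.range g.dualMap)
  have hquot := nonempty_quotient_range_equiv_of_comp_eq_dualMap (K' := LinearMap.ker g.dualMap)
    ν μ (LinearMap.ker g.dualMap).subtype (dualMap_subtype_ker_surjective g.dualMap)
    (LinearMap.subtype_comp_codRestrict ..) (finrank_ker_dualMap g hrank.symm).symm
  exact hquot.map fun e ↦
    Submodule.quotEquivOfEq _ _ hrange_ν.symm ≪≫ₗ e ≪≫ₗ Submodule.quotEquivOfEq _ _ hrange_μ

end Duality

theorem tate_cohomology_lattice_duality_general {R L : Type*} [CommRing R] [IsDomain R]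
    [IsPrincipalIdealRing R] [Finite (R ⧸ Ideal.span {(2 : R)})] [AddCommGroup L] [Module R L]
    [Module.Free R L] [Module.Finite R L] (σ : L →ₗ[R] L) (hσ : σ ∘ₗ σ = LinearMap.id) :
    Finite (InvolutionTateCohomology σ) ∧ Finite (InvolutionTateCohomology σ.dualMap) ∧
      Nonempty (InvolutionTateCohomology σ ≃ₗ[R] InvolutionTateCohomology σ.dualMap) := by
  have hsub : (LinearMap.id - σ) ∘ₗ (LinearMap.id + σ) = 0 := by
    simp [LinearMap.sub_comp, LinearMap.comp_add, hσ]
  have hadd : (LinearMap.id + σ) ∘ₗ (LinearMap.id - σ) = 0 := by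
    simp [LinearMap.add_comp, LinearMap.comp_sub, hσ, add_comm σ]
  have hdual_add : (LinearMap.id + σ).dualMap = LinearMap.id + σ.dualMap := by
    ext; simp
  have hdual_sub : (LinearMap.id - σ).dualMap = LinearMap.id - σ.dualMap := by
    ext; simp
  have hduality := nonempty_middleHomology_equiv_dualMap _ _ hsub hadd rfl
  rw [hdual_add, hdual_sub] at hduality
  exact ⟨finite_involutionTateCohomology σ, finite_involutionTateCohomology σ.dualMap, hduality⟩

/-- For an involution `σ` of a finitely generated free `ℤ`-module `L`, with dual
involution `σ*` on `L* = Hom(L, ℤ)` given by `(σ*φ)(x) = φ(σx)`, the Tate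
cohomology groups `H(L, σ) = ker(1 - σ)/im(1 + σ)` and `H(L*, σ*)` are finite of
the same cardinality. -/
theorem tate_cohomology_lattice_duality {L : Type*} [AddCommGroup L]
    [Module ℤ L] [Module.Free ℤ L] [Module.Finite ℤ L]
    (σ : L →ₗ[ℤ] L) (hσ : σ ∘ₗ σ = LinearMap.id) :
    Finite ((LinearMap.ker ((LinearMap.id : L →ₗ[ℤ] L) - σ)).toAddSubgroup ⧸
        (LinearMap.range ((LinearMap.id : L →ₗ[ℤ] L) + σ)).toAddSubgroup.addSubgroupOf
          (LinearMap.ker ((LinearMap.id : L →ₗ[ℤ] L) - σ)).toAddSubgroup) ∧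
    Finite ((LinearMap.ker ((LinearMap.id : Module.Dual ℤ L →ₗ[ℤ] Module.Dual ℤ L)
            - σ.dualMap)).toAddSubgroup ⧸
        (LinearMap.range ((LinearMap.id : Module.Dual ℤ L →ₗ[ℤ] Module.Dual ℤ L)
            + σ.dualMap)).toAddSubgroup.addSubgroupOf
          (LinearMap.ker ((LinearMap.id : Module.Dual ℤ L →ₗ[ℤ] Module.Dual ℤ L)
            - σ.dualMap)).toAddSubgroup) ∧
    Nat.card ((LinearMap.ker ((LinearMap.id : L →ₗ[ℤ] L) - σ)).toAddSubgroup ⧸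
        (LinearMap.range ((LinearMap.id : L →ₗ[ℤ] L) + σ)).toAddSubgroup.addSubgroupOf
          (LinearMap.ker ((LinearMap.id : L →ₗ[ℤ] L) - σ)).toAddSubgroup)
      = Nat.card ((LinearMap.ker ((LinearMap.id : Module.Dual ℤ L →ₗ[ℤ] Module.Dual ℤ L)
            - σ.dualMap)).toAddSubgroup ⧸
        (LinearMap.range ((LinearMap.id : Module.Dual ℤ L →ₗ[ℤ] Module.Dual ℤ L)
            + σ.dualMap)).toAddSubgroup.addSubgroupOf
          (LinearMap.ker ((LinearMap.id : Module.Dual ℤ L →ₗ[ℤ] Module.Dual ℤ L)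
            - σ.dualMap)).toAddSubgroup) := by
  obtain ⟨hfin, hfin_dual, ⟨e⟩⟩ := tate_cohomology_lattice_duality_general σ hσ
  exact ⟨hfin, hfin_dual, Nat.card_congr e.toEquiv⟩
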